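/- arXiv:1612.02638 — 3 statements merged into one kernel-verified Lean document; each statement's English description precedes it below -/
import Mathlib

section
/- Let m = 2l+1 be odd and let A be an order-m, dimension-(n+1) real symmetric tensor that is regularly decomposable, i.e. its 0-th row tensor satisfies A₀ = Σ_{k=1}^r (u^{(k)})^{⊗2l} with all u^{(k)} regular vectors, and its other row tensors satisfy A_i = Σ_{k=1}^r (u^{(k)}_i / u^{(k)}_0) (u^{(k)})^{⊗2l} for i = 1,…,n. Then A can be written as A = Σ_{k=1}^r α_k (v^{(k)})^{⊗m}, where each α_k > 0 and each v^{(k)} = (1, v^{(k)}_1, …, v^{(k)}_n) satisfies Σ_{i=1}^n (v^{(k)}_i)² = 1. -/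
/-!
Normalise each regular vector `u` to `v = u / u₀`, so that `v₀ = 1` and regularity becomes
`∑ vᵢ² = 1`. Since `u₀ / u₀ = 1`, all row equations have the common form
`A_i = ∑ (uᵢ / u₀) u^{⊗2l}`, and substituting `u = u₀ v` turns them into
`A_i = ∑ u₀^{2l} vᵢ v^{⊗2l}`. Hence `α = u₀^{2l}`, which is positive because the exponent is even.
-/

open Finset Matrix

/-- Rank-one tensor `u^{⊗m}` with entries `u_{i₁}⋯u_{i_m}`. -/
def rankOne (n m : ℕ) (u : Fin (n+1) → ℝ) : (Fin m → Fin (n+1)) → ℝ :=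
  fun i => ∏ j, u (i j)

/-- A vector `x ∈ ℝ^{n+1}` is regular if `x₀ ≠ 0` and `x₀² = x₁² + ⋯ + x_n²`. -/
def IsRegularVec (n : ℕ) (x : Fin (n+1) → ℝ) : Prop :=
  x 0 ≠ 0 ∧ x 0 ^ 2 = ∑ i : Fin n, x i.succ ^ 2

/-- An order-`m`, dimension-`(n+1)` real tensor is symmetric if it is invariant
under permutations of its indices. -/
def IsSymmetricTensor (n m : ℕ) (A : (Fin m → Fin (n+1)) → ℝ) : Prop :=
  ∀ (σ : Equiv.Perm (Fin m)) (i : Fin m → Fin (n+1)), A (i ∘ σ) = A i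

/-- `A • x^{⊗m} = Σ_{i₁,…,i_m} a_{i₁…i_m} x_{i₁}⋯x_{i_m}`. -/
def tEval (n m : ℕ) (A : (Fin m → Fin (n+1)) → ℝ) (x : Fin (n+1) → ℝ) : ℝ :=
  ∑ i : Fin m → Fin (n+1), A i * ∏ j, x (i j)

/-- Inner product of two tensors: `A • B = Σ_{i₁,…,i_m} a_{i₁…i_m} b_{i₁…i_m}`. -/
def tDot (n m : ℕ) (A B : (Fin m → Fin (n+1)) → ℝ) : ℝ :=
  ∑ i : Fin m → Fin (n+1), A i * B i

/-- A tensor is completely decomposable if `A = Σ_{k=1}^r (u^{(k)})^{⊗m}`. -/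
def CompletelyDecomposable (n m : ℕ) (A : (Fin m → Fin (n+1)) → ℝ) : Prop :=
  ∃ (r : ℕ) (u : Fin r → Fin (n+1) → ℝ), A = ∑ k, rankOne n m (u k)

/-- An even-order tensor is regularly decomposable if `A = Σ_{k=1}^r (u^{(k)})^{⊗m}`
with all `u^{(k)}` regular vectors. -/
def RegDecompEven (n m : ℕ) (A : (Fin m → Fin (n+1)) → ℝ) : Prop :=
  ∃ (r : ℕ) (u : Fin r → Fin (n+1) → ℝ),
    (∀ k, IsRegularVec n (u k)) ∧ A = ∑ k, rankOne n m (u k)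

/-- An odd-order (`m = 2l+1`) tensor is regularly decomposable if its 0-th row tensor
`A₀ = Σ_k (u^{(k)})^{⊗2l}` with all `u^{(k)}` regular, and its other row tensors are
`A_i = Σ_k (u^{(k)}_i / u^{(k)}_0) (u^{(k)})^{⊗2l}`. -/
def RegDecompOdd (n l : ℕ) (A : (Fin (2*l+1) → Fin (n+1)) → ℝ) : Prop :=
  ∃ (r : ℕ) (u : Fin r → Fin (n+1) → ℝ),
    (∀ k, IsRegularVec n (u k)) ∧
    (∀ j : Fin (2*l) → Fin (n+1), A (Fin.cons 0 j) = ∑ k, rankOne n (2*l) (u k) j) ∧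
    (∀ (i : Fin n) (j : Fin (2*l) → Fin (n+1)),
      A (Fin.cons i.succ j) = ∑ k, (u k i.succ / u k 0) * rankOne n (2*l) (u k) j)

/-- The transformed tensor `𝓡^m A`, with entries
`b_{l₁…l_m} = Σ_{i₁,…,i_m} a_{i₁…i_m} r_{l₁i₁}⋯r_{l_m i_m}`. -/
def tTransform (n m : ℕ) (M : Matrix (Fin (n+1)) (Fin (n+1)) ℝ)
    (A : (Fin m → Fin (n+1)) → ℝ) : (Fin m → Fin (n+1)) → ℝ :=
  fun l => ∑ i : Fin m → Fin (n+1), A i * ∏ j, M (l j) (i j)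

/-- A normalized orthogonal matrix: an `(n+1)×(n+1)` orthogonal matrix of block form
`[[1, 0ᵀ],[0, R]]` with `R` an `n×n` orthogonal matrix. -/
def IsNormalizedOrthogonal (n : ℕ) (M : Matrix (Fin (n+1)) (Fin (n+1)) ℝ) : Prop :=
  M 0 0 = 1 ∧ (∀ i : Fin n, M 0 i.succ = 0 ∧ M i.succ 0 = 0) ∧
  ∃ R : Matrix (Fin n) (Fin n) ℝ, Rᵀ * R = 1 ∧ ∀ i j : Fin n, M i.succ j.succ = R i j

section RankOne

variable {n m : ℕ}

theorem rankOne_cons (u : Fin (n + 1) → ℝ) (i : Fin (n + 1)) (j : Fin m → Fin (n + 1)) :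
    rankOne n (m + 1) u (Fin.cons i j) = u i * rankOne n m u j := by
  simp only [rankOne, Fin.prod_univ_succ, Fin.cons_zero, Fin.cons_succ]

theorem rankOne_smul (c : ℝ) (u : Fin (n + 1) → ℝ) :
    rankOne n m (c • u) = c ^ m • rankOne n m u := by
  funext i
  simp only [rankOne, Pi.smul_apply, smul_eq_mul, prod_mul_distrib, prod_const, card_univ,
    Fintype.card_fin]

end RankOne

/-- The dehomogenization `u / u₀` of a vector: the multiple of `u` whose zeroth coordinate is `1`.
It supplies the vectors `v^{(k)}` of the decomposition. If `u₀ = 0`, it is the zero vector. -/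
noncomputable def dehomogenize {n : ℕ} (u : Fin (n + 1) → ℝ) : Fin (n + 1) → ℝ :=
  (u 0)⁻¹ • u

section Dehomogenize

variable {n m : ℕ} {u : Fin (n + 1) → ℝ}

theorem dehomogenize_apply (u : Fin (n + 1) → ℝ) (i : Fin (n + 1)) :
    dehomogenize u i = u i / u 0 :=
  inv_mul_eq_div (u 0) (u i)

theorem dehomogenize_zero (hu : u 0 ≠ 0) : dehomogenize u 0 = 1 := by
  rw [dehomogenize_apply, div_self hu]

theorem smul_dehomogenize (hu : u 0 ≠ 0) : u 0 • dehomogenize u = u :=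
  smul_inv_smul₀ hu u

theorem IsRegularVec.sum_sq_dehomogenize (hu : IsRegularVec n u) :
    ∑ i : Fin n, dehomogenize u i.succ ^ 2 = 1 := by
  simp only [dehomogenize_apply, div_pow]
  rw [← sum_div, ← hu.2, div_self (pow_ne_zero 2 hu.1)]

theorem pow_smul_rankOne_dehomogenize (hu : u 0 ≠ 0) :
    u 0 ^ m • rankOne n m (dehomogenize u) = rankOne n m u := by
  rw [← rankOne_smul, smul_dehomogenize hu]

theorem pow_mul_rankOne_dehomogenize_cons (hu : u 0 ≠ 0) (i : Fin (n + 1))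
    (j : Fin m → Fin (n + 1)) :
    u 0 ^ m * rankOne n (m + 1) (dehomogenize u) (Fin.cons i j) =
      u i / u 0 * rankOne n m u j := by
  calc u 0 ^ m * rankOne n (m + 1) (dehomogenize u) (Fin.cons i j)
      = dehomogenize u i * (u 0 ^ m • rankOne n m (dehomogenize u)) j := by
        rw [rankOne_cons, mul_left_comm, Pi.smul_apply, smul_eq_mul]
    _ = u i / u 0 * rankOne n m u j := by
        rw [pow_smul_rankOne_dehomogenize hu, dehomogenize_apply]

end Dehomogenize

theorem eq_sum_pow_smul_rankOne_dehomogenize {ι : Type*} [Fintype ι] {n m : ℕ}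
    {A : (Fin (m + 1) → Fin (n + 1)) → ℝ} {u : ι → Fin (n + 1) → ℝ} (hu : ∀ k, u k 0 ≠ 0)
    (hrow : ∀ (i : Fin (n + 1)) (j : Fin m → Fin (n + 1)),
      A (Fin.cons i j) = ∑ k, u k i / u k 0 * rankOne n m (u k) j) :
    A = ∑ k, u k 0 ^ m • rankOne n (m + 1) (dehomogenize (u k)) := by
  funext i
  cases i using Fin.consCases with
  | cons i j =>
    rw [hrow, Finset.sum_apply]
    exact sum_congr rfl fun k _ => (pow_mul_rankOne_dehomogenize_cons (hu k) i j).symm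

/-- an odd-order (`m = 2l+1`) regularly decomposable tensor can be written
as `A = Σ_{k=1}^r α_k (v^{(k)})^{⊗m}` with `α_k > 0`, `v^{(k)}_0 = 1` and
`Σ_{i=1}^n (v^{(k)}_i)² = 1`. -/
theorem statement_1 (n l r : ℕ) (A : (Fin (2*l+1) → Fin (n+1)) → ℝ)
    (hsym : IsSymmetricTensor n (2*l+1) A)
    (u : Fin r → Fin (n+1) → ℝ)
    (hreg : ∀ k, IsRegularVec n (u k))
    (hrow0 : ∀ j : Fin (2*l) → Fin (n+1),
      A (Fin.cons 0 j) = ∑ k, rankOne n (2*l) (u k) j)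
    (hrow : ∀ (i : Fin n) (j : Fin (2*l) → Fin (n+1)),
      A (Fin.cons i.succ j) = ∑ k, (u k i.succ / u k 0) * rankOne n (2*l) (u k) j) :
    ∃ (α : Fin r → ℝ) (v : Fin r → Fin (n+1) → ℝ),
      (∀ k, 0 < α k) ∧ (∀ k, v k 0 = 1) ∧
      (∀ k, ∑ i : Fin n, v k i.succ ^ 2 = 1) ∧
      A = ∑ k, α k • rankOne n (2*l+1) (v k) := by
  have hu (k : Fin r) : u k 0 ≠ 0 := (hreg k).1
  have row_eq (i : Fin (n + 1)) (j : Fin (2 * l) → Fin (n + 1)) :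
      A (Fin.cons i j) = ∑ k, u k i / u k 0 * rankOne n (2 * l) (u k) j := by
    cases i using Fin.cases with
    | zero => simp only [hrow0, div_self (hu _), one_mul]
    | succ i => exact hrow i j
  exact ⟨fun k => u k 0 ^ (2 * l), fun k => dehomogenize (u k),
    fun k => (even_two_mul l).pow_pos (hu k),
    fun k => dehomogenize_zero (hu k),
    fun k => (hreg k).sum_sq_dehomogenize,
    eq_sum_pow_smul_rankOne_dehomogenize hu row_eq⟩
end

section
/- Let m be even, let 𝓡 be an (n+1)×(n+1) normalized orthogonal matrix (block form [[1, 0ᵀ],[0, R]] with R orthogonal), let A be an order-m, dimension-(n+1) real symmetric tensor, and let B = 𝓡^m A. Then A is regularly decomposable if and only if B is regularly decomposable. -/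
/-!
A vector is regular exactly when it is a nonzero null vector of the Minkowski form
`x₀² - x₁² - ⋯ - x_n²`, so every Lorentz matrix, in particular every normalized orthogonal one,
permutes the regular vectors. As `𝓡^m` is additive and sends `u^{⊗m}` to `(𝓡 u)^{⊗m}`, it maps
regular decompositions to regular decompositions; so does its inverse `(𝓡⁻¹)^m`.
-/

open Finset Matrix

variable {n m : ℕ} {M : Matrix (Fin (n + 1)) (Fin (n + 1)) ℝ}

lemma tTransform_sum {ι : Type*} (s : Finset ι) (M : Matrix (Fin (n + 1)) (Fin (n + 1)) ℝ)
    (A : ι → (Fin m → Fin (n + 1)) → ℝ) :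
    tTransform n m M (∑ k ∈ s, A k) = ∑ k ∈ s, tTransform n m M (A k) := by
  funext l
  simp only [tTransform, Finset.sum_apply, Finset.sum_mul]
  exact Finset.sum_comm

lemma tTransform_rankOne (M : Matrix (Fin (n + 1)) (Fin (n + 1)) ℝ) (u : Fin (n + 1) → ℝ) :
    tTransform n m M (rankOne n m u) = rankOne n m (M *ᵥ u) := by
  funext l
  simp only [tTransform, rankOne, mulVec, dotProduct, Fintype.prod_sum, ← Finset.prod_mul_distrib,
    mul_comm]

lemma tTransform_one (A : (Fin m → Fin (n + 1)) → ℝ) : tTransform n m 1 A = A := by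
  funext l
  simp [tTransform, Matrix.one_apply, Finset.prod_ite_zero, ← funext_iff]

lemma tTransform_tTransform (M N : Matrix (Fin (n + 1)) (Fin (n + 1)) ℝ)
    (A : (Fin m → Fin (n + 1)) → ℝ) :
    tTransform n m M (tTransform n m N A) = tTransform n m (M * N) A := by
  funext p
  have prod_entries (i : Fin m → Fin (n + 1)) :
      ∏ j, (M * N) (p j) (i j) = ∑ l : Fin m → Fin (n + 1), ∏ j, M (p j) (l j) * N (l j) (i j) := by
    simp only [Matrix.mul_apply, Fintype.prod_sum]
  simp only [tTransform, prod_entries, Finset.prod_mul_distrib, Finset.sum_mul, Finset.mul_sum]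
  rw [Finset.sum_comm]
  exact Finset.sum_congr rfl fun i _ ↦ Finset.sum_congr rfl fun l _ ↦ by ring

lemma RegDecompEven.tTransform {A : (Fin m → Fin (n + 1)) → ℝ} (hA : RegDecompEven n m A)
    (hM : ∀ x, IsRegularVec n x → IsRegularVec n (M *ᵥ x)) :
    RegDecompEven n m (tTransform n m M A) := by
  obtain ⟨r, u, hu, rfl⟩ := hA
  refine ⟨r, fun k ↦ M *ᵥ u k, fun k ↦ hM _ (hu k), ?_⟩
  simp only [tTransform_sum, tTransform_rankOne]

/-- The Gram matrix `diag(1, -1, …, -1)` of the Minkowski form on `ℝ^{n+1}`, whose null vectors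
other than `0` are the regular vectors. -/
def minkowskiMatrix (n : ℕ) : Matrix (Fin (n + 1)) (Fin (n + 1)) ℝ :=
  diagonal (Fin.cons 1 fun _ ↦ -1)

lemma minkowskiMatrix_mul_self (n : ℕ) : minkowskiMatrix n * minkowskiMatrix n = 1 := by
  rw [minkowskiMatrix, diagonal_mul_diagonal, ← diagonal_one]
  congr 1
  funext i
  cases i using Fin.cases <;> simp

lemma dotProduct_minkowskiMatrix_mulVec (x y : Fin (n + 1) → ℝ) :
    x ⬝ᵥ minkowskiMatrix n *ᵥ y = x 0 * y 0 - ∑ i : Fin n, x i.succ * y i.succ := by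
  simp [minkowskiMatrix, mulVec_diagonal, dotProduct, Fin.sum_univ_succ, sub_eq_add_neg]

lemma isRegularVec_iff {x : Fin (n + 1) → ℝ} :
    IsRegularVec n x ↔ x ≠ 0 ∧ x ⬝ᵥ minkowskiMatrix n *ᵥ x = 0 := by
  simp only [IsRegularVec, dotProduct_minkowskiMatrix_mulVec, sub_eq_zero, ← pow_two]
  refine and_congr_left fun hnull ↦ not_congr ⟨fun h0 ↦ ?_, fun hx ↦ congrFun hx 0⟩
  have hsum : ∑ i : Fin n, x i.succ ^ 2 = 0 := by rw [← hnull, h0, zero_pow two_ne_zero]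
  have hsucc := (Fintype.sum_eq_zero_iff_of_nonneg fun i ↦ sq_nonneg (x (Fin.succ i))).1 hsum
  funext i
  cases i using Fin.cases with
  | zero => exact h0
  | succ i => exact pow_eq_zero_iff two_ne_zero |>.1 (congrFun hsucc i)

/-- A Lorentz matrix: one preserving the Minkowski form, with no condition on the determinant or
the direction of time. -/
def IsLorentz (M : Matrix (Fin (n + 1)) (Fin (n + 1)) ℝ) : Prop :=
  Mᵀ * minkowskiMatrix n * M = minkowskiMatrix n

namespace IsLorentz

lemma isUnit_det (hM : IsLorentz M) : IsUnit M.det := by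
  refine isUnit_det_of_left_inverse (B := minkowskiMatrix n * Mᵀ * minkowskiMatrix n) ?_
  calc minkowskiMatrix n * Mᵀ * minkowskiMatrix n * M
      = minkowskiMatrix n * (Mᵀ * minkowskiMatrix n * M) := by simp only [Matrix.mul_assoc]
    _ = 1 := by rw [hM, minkowskiMatrix_mul_self]

lemma inv (hM : IsLorentz M) : IsLorentz M⁻¹ := by
  have hinv : M * M⁻¹ = 1 := mul_nonsing_inv M hM.isUnit_det
  calc M⁻¹ᵀ * minkowskiMatrix n * M⁻¹
      = M⁻¹ᵀ * (Mᵀ * minkowskiMatrix n * M) * M⁻¹ := by rw [hM]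
    _ = (M * M⁻¹)ᵀ * minkowskiMatrix n * (M * M⁻¹) := by
      simp only [transpose_mul, Matrix.mul_assoc]
    _ = minkowskiMatrix n := by rw [hinv, transpose_one, Matrix.one_mul, Matrix.mul_one]

lemma dotProduct_mulVec_mulVec (hM : IsLorentz M) (x y : Fin (n + 1) → ℝ) :
    (M *ᵥ x) ⬝ᵥ minkowskiMatrix n *ᵥ (M *ᵥ y) = x ⬝ᵥ minkowskiMatrix n *ᵥ y := by
  rw [← vecMul_transpose, ← dotProduct_mulVec, mulVec_mulVec, mulVec_mulVec, hM]

lemma isRegularVec_mulVec (hM : IsLorentz M) {x : Fin (n + 1) → ℝ} (hx : IsRegularVec n x) :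
    IsRegularVec n (M *ᵥ x) := by
  rw [isRegularVec_iff] at hx ⊢
  obtain ⟨hx0, hnull⟩ := hx
  refine ⟨fun hMx ↦ hx0 ?_, by rw [hM.dotProduct_mulVec_mulVec, hnull]⟩
  exact eq_zero_of_mulVec_eq_zero hM.isUnit_det.ne_zero hMx

end IsLorentz

lemma IsNormalizedOrthogonal.isLorentz (hM : IsNormalizedOrthogonal n M) : IsLorentz M := by
  obtain ⟨h00, hblock, R, hR, hMR⟩ := hM
  have hR_entry (i j : Fin n) : ∑ k, R k i * R k j = (1 : Matrix (Fin n) (Fin n) ℝ) i j := by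
    rw [← hR, Matrix.mul_apply]
    rfl
  ext i j
  have hentry : (Mᵀ * minkowskiMatrix n * M) i j
      = M 0 i * M 0 j - ∑ k : Fin n, M k.succ i * M k.succ j := by
    rw [Matrix.mul_assoc, Matrix.mul_apply]
    exact dotProduct_minkowskiMatrix_mulVec (fun k ↦ M k i) fun k ↦ M k j
  rw [hentry]
  cases i using Fin.cases <;> cases j using Fin.cases <;>
    simp [minkowskiMatrix, h00, hblock, hMR, hR_entry, diagonal_apply, one_apply, neg_ite,
      (Fin.succ_ne_zero _).symm]

theorem statement_10_general (hM : IsLorentz M) (A : (Fin m → Fin (n + 1)) → ℝ) :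
    RegDecompEven n m A ↔ RegDecompEven n m (tTransform n m M A) := by
  refine ⟨fun hA ↦ hA.tTransform fun _ ↦ hM.isRegularVec_mulVec, fun hB ↦ ?_⟩
  have hA := hB.tTransform fun _ ↦ hM.inv.isRegularVec_mulVec
  rwa [tTransform_tTransform, nonsing_inv_mul M hM.isUnit_det, tTransform_one] at hA

/-- for even `m`, a normalized orthogonal matrix `𝓡`, a symmetric tensor
`A` and `B = 𝓡^m A`: `A` is regularly decomposable iff `B` is regularly decomposable. -/
theorem statement_10 (n m : ℕ) (hm : Even m)
    (M : Matrix (Fin (n+1)) (Fin (n+1)) ℝ)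
    (hM : Mᵀ * M = 1) (hMn : IsNormalizedOrthogonal n M)
    (A : (Fin m → Fin (n+1)) → ℝ) (hsym : IsSymmetricTensor n m A)
    (B : (Fin m → Fin (n+1)) → ℝ) (hB : B = tTransform n m M A) :
    RegDecompEven n m A ↔ RegDecompEven n m B := by
  subst hB
  exact statement_10_general hMn.isLorentz A
end

section
/- Suppose A and B are order-m, dimension-(n+1) real symmetric tensors that are both completely decomposable. Then their Hadamard product A ∘ B, defined entrywise by (A ∘ B)_{i₁…i_m} = a_{i₁…i_m} b_{i₁…i_m}, is also completely decomposable. -/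
open Finset Matrix

/-!
Since `u^{⊗m} ∘ v^{⊗m} = (u ∘ v)^{⊗m}`, the rank-one tensors form a submonoid for the Hadamard
product. The additive closure of a multiplicative submonoid of a semiring is a subsemiring, so
the completely decomposable tensors are closed under the Hadamard product.
-/

theorem mem_addClosure_range_iff_exists_fin_sum {α M : Type*} [AddCommMonoid M] {f : α → M}
    {x : M} :
    x ∈ AddSubmonoid.closure (Set.range f) ↔ ∃ (r : ℕ) (u : Fin r → α), x = ∑ k, f (u k) := by
  constructor
  · intro hx
    induction hx using AddSubmonoid.closure_induction with
    | mem x hx =>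
      obtain ⟨a, rfl⟩ := hx
      exact ⟨1, fun _ => a, by rw [Fin.sum_univ_one]⟩
    | zero => exact ⟨0, Fin.elim0, by rw [Fin.sum_univ_zero]⟩
    | add x y _ _ hx hy =>
      obtain ⟨r, u, rfl⟩ := hx
      obtain ⟨s, v, rfl⟩ := hy
      exact ⟨r + s, Fin.append u v, by
        simp only [Fin.sum_univ_add, Fin.append_left, Fin.append_right]⟩
  · rintro ⟨r, u, rfl⟩
    exact sum_mem fun k _ => AddSubmonoid.subset_closure (Set.mem_range_self (u k))

/-- The tensor power `u ↦ u^{⊗κ}`, sending a vector `u` to the rank-one tensor with entries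
`∏ j, u (i j)`, bundled as a homomorphism from vectors under the entrywise product to tensors
under the Hadamard product (the pointwise product of functions). -/
def tensorPowerHom (ι κ R : Type*) [Fintype κ] [CommMonoid R] : (ι → R) →* ((κ → ι) → R) where
  toFun u i := ∏ j, u (i j)
  map_one' := funext fun _ => Finset.prod_const_one
  map_mul' _ _ := funext fun _ => Finset.prod_mul_distrib

theorem completelyDecomposable_iff_mem_closure {n m : ℕ} {A : (Fin m → Fin (n + 1)) → ℝ} :
    CompletelyDecomposable n m A ↔
      A ∈ AddSubmonoid.closure (Set.range (tensorPowerHom (Fin (n + 1)) (Fin m) ℝ)) :=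
  mem_addClosure_range_iff_exists_fin_sum.symm

theorem statement_13_general {ι κ R : Type*} [Fintype κ] [CommSemiring R] {A B : (κ → ι) → R}
    (hA : A ∈ AddSubmonoid.closure (Set.range (tensorPowerHom ι κ R)))
    (hB : B ∈ AddSubmonoid.closure (Set.range (tensorPowerHom ι κ R))) :
    A * B ∈ AddSubmonoid.closure (Set.range (tensorPowerHom ι κ R)) := by
  rw [← MonoidHom.coe_mrange] at hA hB ⊢
  exact MulMemClass.mul_mem_add_closure hA hB

/-- the Hadamard product of two completely decomposable symmetric
tensors is completely decomposable. -/
theorem statement_13 (n m : ℕ) (A B : (Fin m → Fin (n+1)) → ℝ)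
    (hsymA : IsSymmetricTensor n m A) (hsymB : IsSymmetricTensor n m B)
    (hA : CompletelyDecomposable n m A) (hB : CompletelyDecomposable n m B) :
    CompletelyDecomposable n m (fun i => A i * B i) := by
  rw [completelyDecomposable_iff_mem_closure] at hA hB ⊢
  exact statement_13_general hA hB
end
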